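/- The matrix coefficient functionals ᵐc^i_j : A_t → ℂ, defined by ᵐc^i_j(Z) = (ρ_m(Z))_{ij}, taken over all integers m ≥ 0 and all 0 ≤ i, j ≤ m, are linearly independent in the dual vector space of A_t (hence form a basis of their linear span, the subalgebra qSL₂ of matrix coefficients). -/

import Mathlib

open scoped TensorProduct
open Complex

noncomputable section

/-- The four generators `X`, `Y`, `K`, `K⁻¹` of the algebra `Aₜ`. -/
inductive QGen : Type
  | X | Y | K | K'
  deriving DecidableEq

/-- The image of a generator in the free algebra on the generators. -/
def qg (x : QGen) : FreeAlgebra ℂ QGen := FreeAlgebra.ι ℂ x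

/-- The defining relations of `Aₜ`:
`KX = t²XK`, `KY = t⁻²YK`, `XY − YX = (K² − K⁻²)/(t² − t⁻²)`, `KK⁻¹ = K⁻¹K = 1`. -/
inductive QRel (t : ℂ) : FreeAlgebra ℂ QGen → FreeAlgebra ℂ QGen → Prop
  | KX : QRel t (qg .K * qg .X) ((t ^ 2 : ℂ) • (qg .X * qg .K))
  | KY : QRel t (qg .K * qg .Y) ((t⁻¹ ^ 2 : ℂ) • (qg .Y * qg .K))
  | XY : QRel t (qg .X * qg .Y - qg .Y * qg .X)
      (((t ^ 2 - t⁻¹ ^ 2)⁻¹ : ℂ) • (qg .K * qg .K - qg .K' * qg .K'))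
  | KK' : QRel t (qg .K * qg .K') 1
  | K'K : QRel t (qg .K' * qg .K) 1

/-- The algebra `Aₜ`: the quotient of the free algebra by the defining relations. -/
abbrev At (t : ℂ) : Type := RingQuot (QRel t)

/-- The generator `X` in `Aₜ`. -/
def aX (t : ℂ) : At t := RingQuot.mkAlgHom ℂ (QRel t) (qg .X)
/-- The generator `Y` in `Aₜ`. -/
def aY (t : ℂ) : At t := RingQuot.mkAlgHom ℂ (QRel t) (qg .Y)
/-- The generator `K` in `Aₜ`. -/
def aK (t : ℂ) : At t := RingQuot.mkAlgHom ℂ (QRel t) (qg .K)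
/-- The generator `K⁻¹` in `Aₜ`. -/
def aK' (t : ℂ) : At t := RingQuot.mkAlgHom ℂ (QRel t) (qg .K')

/-- The quantum integer `[n] = (t^{2n} − t^{−2n})/(t² − t⁻²)`. -/
def qint (t : ℂ) (n : ℤ) : ℂ := (t ^ (2 * n) - t ^ (-(2 * n))) / (t ^ 2 - t⁻¹ ^ 2)

/-- The matrix of `ρ_m(K)`: `K e_j = t^{m−2j} e_j`. -/
def Kmat (t : ℂ) (m : ℕ) : Matrix (Fin (m + 1)) (Fin (m + 1)) ℂ :=
  Matrix.diagonal fun j => t ^ ((m : ℤ) - 2 * (j : ℤ))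

/-- The matrix of `ρ_m(K⁻¹)`: `K⁻¹ e_j = t^{−(m−2j)} e_j`. -/
def K'mat (t : ℂ) (m : ℕ) : Matrix (Fin (m + 1)) (Fin (m + 1)) ℂ :=
  Matrix.diagonal fun j => t ^ (-((m : ℤ) - 2 * (j : ℤ)))

/-- The matrix of `ρ_m(X)`: `X e_j = [j] e_{j−1}` (with `e_{−1} = 0`). -/
def Xmat (t : ℂ) (m : ℕ) : Matrix (Fin (m + 1)) (Fin (m + 1)) ℂ :=
  Matrix.of fun i j => if (j : ℕ) = (i : ℕ) + 1 then qint t (j : ℤ) else 0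

/-- The matrix of `ρ_m(Y)`: `Y e_j = [m−j] e_{j+1}` (with `e_{m+1} = 0`). -/
def Ymat (t : ℂ) (m : ℕ) : Matrix (Fin (m + 1)) (Fin (m + 1)) ℂ :=
  Matrix.of fun i j => if (i : ℕ) = (j : ℕ) + 1 then qint t ((m : ℤ) - (j : ℤ)) else 0

/-- `ρ` is the representation `ρ_m : Aₜ → M_{m+1}(ℂ)` determined by the matrices above. -/
def IsRho (t : ℂ) (m : ℕ) (ρ : At t →ₐ[ℂ] Matrix (Fin (m + 1)) (Fin (m + 1)) ℂ) : Prop :=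
  ρ (aX t) = Xmat t m ∧ ρ (aY t) = Ymat t m ∧ ρ (aK t) = Kmat t m ∧ ρ (aK' t) = K'mat t m

/-- The matrix coefficient functional `ᵐc^i_j : Aₜ → ℂ`, `Z ↦ (ρ_m(Z))_{ij}`. -/
def coeffFn (t : ℂ) (ρ : ∀ m : ℕ, At t →ₐ[ℂ] Matrix (Fin (m + 1)) (Fin (m + 1)) ℂ)
    (p : Σ m : ℕ, Fin (m + 1) × Fin (m + 1)) : Module.Dual ℂ (At t) where
  toFun Z := ρ p.1 Z p.2.1 p.2.2
  map_add' a b := by simp [Matrix.add_apply]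
  map_smul' c a := by simp [Matrix.smul_apply]

theorem zpow_inj_aux (t : ℂ) (ht : t ≠ 0) (hroot : ∀ k : ℕ, 0 < k → t ^ k ≠ 1) (a b : ℤ)
    (h : t ^ a = t ^ b) : a = b := by
  wlog hab : b ≤ a generalizing a b
  · exact (this b a h.symm (by omega)).symm
  by_contra hne
  have h1 : t ^ (a - b) = 1 := by
    rw [zpow_sub₀ ht, h, div_self (zpow_ne_zero _ ht)]
  apply hroot (a - b).toNat (by omega)
  rw [← zpow_natCast, Int.toNat_of_nonneg (by omega), h1]

theorem qint_ne_zero_aux (t : ℂ) (ht : t ≠ 0) (hroot : ∀ k : ℕ, 0 < k → t ^ k ≠ 1) (n : ℤ)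
    (hn : 0 < n) : qint t n ≠ 0 := by
  unfold qint
  apply div_ne_zero
  · rw [sub_ne_zero]
    intro h
    have := zpow_inj_aux t ht hroot _ _ h
    omega
  · rw [sub_ne_zero]
    intro h
    have h2 : t ^ (2 : ℤ) = t ^ (-2 : ℤ) := by
      rw [zpow_neg, ← inv_zpow]
      exact_mod_cast h
    have := zpow_inj_aux t ht hroot _ _ h2
    omega

theorem Ypow_aux (t : ℂ) (ht : t ≠ 0) (hroot : ∀ k : ℕ, 0 < k → t ^ k ≠ 1) (m i : ℕ)
    (hi : i ≤ m) : ∃ c : ℂ, c ≠ 0 ∧ ∀ a : Fin (m + 1),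
      (Ymat t m ^ i) a 0 = if (a : ℕ) = i then c else 0 := by
  induction i with
  | zero =>
    refine ⟨1, one_ne_zero, fun a => ?_⟩
    simp [Matrix.one_apply]
  | succ i ih =>
    obtain ⟨c, hc, h⟩ := ih (by omega)
    refine ⟨qint t ((m : ℤ) - (i : ℤ)) * c,
      mul_ne_zero (qint_ne_zero_aux t ht hroot _ (by omega)) hc, fun a => ?_⟩
    rw [pow_succ', Matrix.mul_apply, Finset.sum_eq_single (⟨i, by omega⟩ : Fin (m + 1))]
    · rw [h]
      simp [Ymat]
    · intro b _ hb
      rw [h, if_neg (fun hh => hb (Fin.ext hh)), mul_zero]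
    · simp

theorem Xpow_aux (t : ℂ) (ht : t ≠ 0) (hroot : ∀ k : ℕ, 0 < k → t ^ k ≠ 1) (m j : ℕ)
    (hj : j ≤ m) : ∃ c : ℂ, c ≠ 0 ∧ ∀ b : Fin (m + 1),
      (Xmat t m ^ j) 0 b = if (b : ℕ) = j then c else 0 := by
  induction j with
  | zero =>
    refine ⟨1, one_ne_zero, fun a => ?_⟩
    simp [Matrix.one_apply, eq_comm (a := (0 : Fin (m + 1)))]
  | succ j ih =>
    obtain ⟨c, hc, h⟩ := ih (by omega)
    refine ⟨c * qint t ((j + 1 : ℕ) : ℤ),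
      mul_ne_zero hc (qint_ne_zero_aux t ht hroot _ (by omega)), fun b => ?_⟩
    rw [pow_succ, Matrix.mul_apply, Finset.sum_eq_single (⟨j, by omega⟩ : Fin (m + 1))]
    · rw [h]
      by_cases hb : (b : ℕ) = j + 1
      · simp [Xmat, hb]
      · simp [Xmat, hb]
    · intro k _ hk
      rw [h, if_neg (fun hh => hk (Fin.ext hh)), zero_mul]
    · simp

/-- A polynomial vanishing on all `t ^ w`, `-m ≤ w < m`. -/
def Qpoly (t : ℂ) (m : ℕ) : Polynomial ℂ :=
  ∏ w ∈ Finset.Ico (-(m : ℤ)) m, (Polynomial.X - Polynomial.C (t ^ w))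

theorem Qpoly_eval_ne (t : ℂ) (ht : t ≠ 0) (hroot : ∀ k : ℕ, 0 < k → t ^ k ≠ 1) (m : ℕ) :
    (Qpoly t m).eval (t ^ (m : ℤ)) ≠ 0 := by
  rw [Qpoly, Polynomial.eval_prod, Finset.prod_ne_zero_iff]
  intro w hw
  rw [Finset.mem_Ico] at hw
  simp only [Polynomial.eval_sub, Polynomial.eval_X, Polynomial.eval_C]
  rw [sub_ne_zero]
  intro h
  have := zpow_inj_aux t ht hroot _ _ h
  omega

theorem Qpoly_eval_eq (t : ℂ) (m : ℕ) (w : ℤ) (h1 : -(m : ℤ) ≤ w) (h2 : w < m) :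
    (Qpoly t m).eval (t ^ w) = 0 := by
  rw [Qpoly, Polynomial.eval_prod]
  apply Finset.prod_eq_zero (Finset.mem_Ico.2 ⟨h1, h2⟩)
  simp

theorem aeval_diag_aux {n : ℕ} (d : Fin n → ℂ) (Q : Polynomial ℂ) :
    Polynomial.aeval (Matrix.diagonal d) Q = Matrix.diagonal fun k => Q.eval (d k) := by
  have h := Polynomial.aeval_algHom_apply (Matrix.diagonalAlgHom (n := Fin n) (α := ℂ) ℂ) d Q
  rw [Matrix.diagonalAlgHom_apply, Matrix.diagonalAlgHom_apply] at h
  rw [h]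
  congr 1
  funext k
  have h2 := Polynomial.aeval_algHom_apply (Pi.evalAlgHom ℂ (fun _ : Fin n => ℂ) k) d Q
  simp only [Pi.evalAlgHom_apply] at h2
  rw [← h2, Polynomial.coe_aeval_eq_eval]

/-- The separating element. -/
def Zsep (t : ℂ) (m i j : ℕ) : At t :=
  aY t ^ i * Polynomial.aeval (aK t) (Qpoly t m) * aX t ^ j

theorem rho_Zsep (t : ℂ) (n m i j : ℕ) (ρ : At t →ₐ[ℂ] Matrix (Fin (n + 1)) (Fin (n + 1)) ℂ)
    (h : IsRho t n ρ) : ρ (Zsep t m i j) = Ymat t n ^ i *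
      Matrix.diagonal (fun k : Fin (n + 1) => (Qpoly t m).eval (t ^ ((n : ℤ) - 2 * (k : ℤ))))
      * Xmat t n ^ j := by
  obtain ⟨hX, hY, hK, _⟩ := h
  rw [Zsep, map_mul, map_mul, map_pow, map_pow, hX, hY, ← Polynomial.aeval_algHom_apply, hK,
    Kmat, aeval_diag_aux]

theorem rho_Zsep_lt (t : ℂ) (n m i j : ℕ) (hn : n < m)
    (ρ : At t →ₐ[ℂ] Matrix (Fin (n + 1)) (Fin (n + 1)) ℂ)
    (h : IsRho t n ρ) : ρ (Zsep t m i j) = 0 := by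
  rw [rho_Zsep t n m i j ρ h]
  have : (fun k : Fin (n + 1) => (Qpoly t m).eval (t ^ ((n : ℤ) - 2 * (k : ℤ)))) = 0 := by
    funext k
    exact Qpoly_eval_eq t m _ (by omega) (by omega)
  rw [this]
  simp

theorem rho_Zsep_eq (t : ℂ) (ht : t ≠ 0) (hroot : ∀ k : ℕ, 0 < k → t ^ k ≠ 1) (m : ℕ)
    (i j : Fin (m + 1)) (ρ : At t →ₐ[ℂ] Matrix (Fin (m + 1)) (Fin (m + 1)) ℂ)
    (h : IsRho t m ρ) : ∃ c : ℂ, c ≠ 0 ∧ ∀ a b,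
      ρ (Zsep t m i j) a b = if a = i ∧ b = j then c else 0 := by
  obtain ⟨c, hc, hY⟩ := Ypow_aux t ht hroot m i (by omega)
  obtain ⟨d, hd, hX⟩ := Xpow_aux t ht hroot m j (by omega)
  refine ⟨c * (Qpoly t m).eval (t ^ (m : ℤ)) * d,
    mul_ne_zero (mul_ne_zero hc (Qpoly_eval_ne t ht hroot m)) hd, fun a b => ?_⟩
  rw [rho_Zsep t m m i j ρ h, Matrix.mul_apply, Finset.sum_eq_single (0 : Fin (m + 1))]
  · rw [Matrix.mul_diagonal, hY, hX]
    by_cases ha : a = i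
    · by_cases hb : b = j
      · simp [ha, hb]
      · simp [hb, Fin.val_inj]
    · simp [ha, Fin.val_inj]
  · intro k _ hk
    have hk' : 0 < (k : ℕ) := Fin.pos_iff_ne_zero.2 hk
    rw [Matrix.mul_diagonal, Qpoly_eval_eq t m _ (by omega) (by omega)]
    simp
  · simp

/-- The matrix coefficient functionals `ᵐc^i_j`, over all `m ≥ 0` and
`0 ≤ i, j ≤ m`, are linearly independent in the dual space of `Aₜ`. -/
theorem stmt5 (t : ℂ) (ht : t ≠ 0) (hroot : ∀ k : ℕ, 0 < k → t ^ k ≠ 1)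
    (ρ : ∀ m : ℕ, At t →ₐ[ℂ] Matrix (Fin (m + 1)) (Fin (m + 1)) ℂ)
    (hρ : ∀ m, IsRho t m (ρ m)) :
    LinearIndependent ℂ (coeffFn t ρ) := by
  rw [linearIndependent_iff]
  intro l hl
  by_contra hne
  obtain ⟨⟨m, i, j⟩, hp, hmax⟩ := Finset.exists_max_image l.support (fun p => p.1)
    (Finsupp.support_nonempty_iff.2 hne)
  obtain ⟨c, hc, hZ⟩ := rho_Zsep_eq t ht hroot m i j (ρ m) (hρ m)
  have h := congrArg (fun f : Module.Dual ℂ (At t) => f (Zsep t m i j)) hl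
  simp only [Finsupp.linearCombination_apply, Finsupp.sum, LinearMap.sum_apply,
    LinearMap.smul_apply, LinearMap.zero_apply, smul_eq_mul] at h
  rw [Finset.sum_eq_single_of_mem (⟨m, i, j⟩ : Σ m : ℕ, Fin (m + 1) × Fin (m + 1)) hp] at h
  · have h1 : coeffFn t ρ ⟨m, i, j⟩ (Zsep t m i j) = c := by
      change ρ m (Zsep t m i j) i j = c
      rw [hZ]
      simp
    rw [h1] at h
    exact (mul_ne_zero (Finsupp.mem_support_iff.1 hp) hc) h
  · rintro ⟨n, a, b⟩ hq hqne
    have hnm : n ≤ m := hmax _ hq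
    have h0 : coeffFn t ρ ⟨n, a, b⟩ (Zsep t m i j) = 0 := by
      change ρ n (Zsep t m i j) a b = 0
      rcases hnm.lt_or_eq with hlt | rfl
      · rw [rho_Zsep_lt t n m i j hlt (ρ n) (hρ n)]
        rfl
      · rw [hZ, if_neg]
        rintro ⟨rfl, rfl⟩
        exact hqne rfl
    rw [h0, mul_zero]

end
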